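/- Let β and γ be real numbers with β + γ ≥ 1 and γ < 0. Then for every graph G, every external field vector λ with λ_v ∈ [γ/β, 1] for all v ∈ V(G), and every vertex v ∈ V(G): (1) [Z_{G,v}(λ)]₀ ≠ 0, so the ratio R_{G,v}(λ) is well defined, and R_{G,v}(λ) lies in the interval [γ/β, 1]; and (2) the partition function Z_G(λ) is strictly positive. -/

import Mathlib

open scoped BigOperators

/-- A finite undirected multigraph (self-loops and parallel edges permitted),
with vertices `Fin n` and edges given as a multiset of (ordered representatives of)
unordered pairs of vertices.  Since the edge weight below is symmetric, the
orientation of each pair is immaterial. -/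
structure MultiGraph where
  n : ℕ
  edges : Multiset (Fin n × Fin n)

/-- The edge interaction: `A₀₀ = β`, `A₀₁ = A₁₀ = 1`, `A₁₁ = γ`
(spin `false` = 0, spin `true` = 1). -/
def edgeW (β γ : ℝ) (i j : Bool) : ℝ :=
  if i = j then (if i then γ else β) else 1

/-- The partition function with external fields `lam`. -/
def ZR (β γ : ℝ) (G : MultiGraph) (lam : Fin G.n → ℝ) : ℝ :=
  ∑ σ : Fin G.n → Bool,
    (G.edges.map fun e => edgeW β γ (σ e.1) (σ e.2)).prod *
      ∏ v, (if σ v then lam v else 1)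

/-- `[Z_{G,v}(λ)]_i` : the partition function restricted to configurations with `σ v = i`. -/
def ZRv (β γ : ℝ) (G : MultiGraph) (lam : Fin G.n → ℝ) (v : Fin G.n) (i : Bool) : ℝ :=
  ∑ σ : Fin G.n → Bool,
    if σ v = i then
      (G.edges.map fun e => edgeW β γ (σ e.1) (σ e.2)).prod *
        ∏ u, (if σ u then lam u else 1)
    else 0

/-!
Writing the field at `v` as a vector of spin weights, the claim is that one convex cone of vectors
`(f₀, f₁)`, given by `f₀ > 0` and `f₁ / f₀ ∈ [r, 1]`, contains all effective fields felt by a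
vertex. The cone is closed under entrywise products, which settles loops. For an edge `uw` with
`u ≠ w`, let `M i j` be the partition function of the graph without that edge with `u`, `w` pinned
to `i`, `j`. By induction on the number of edges, `M` maps the cone into itself from either side,
and its diagonal lies in the cone, being the effective field at the vertex obtained by identifying
`u` with `w`. Adding the edge replaces `M` by its entrywise product with the interaction matrix, and
it is enough to see that this product maps the two extreme rays `(1, 1)` and `(1, r)` into the cone.
-/

namespace SpinSystem

open Function
open scoped Matrix

section PartitionFunction

variable {V S R : Type*}

/-- The edges after identifying `w` with `u`; the vertex `w` is kept, isolated, so that the vertex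
set does not change. -/
def contract [DecidableEq V] (u w : V) (E : Multiset (V × V)) : Multiset (V × V) :=
  E.map (Prod.map (update id w u) (update id w u))

theorem ne_of_mem_contract [DecidableEq V] {u w : V} (huw : u ≠ w) (E : Multiset (V × V)) :
    ∀ e ∈ contract u w E, e.1 ≠ w ∧ e.2 ≠ w := by
  have hne (x : V) : update id w u x ≠ w := by
    rcases eq_or_ne x w with rfl | hx
    · rwa [update_self]
    · rwa [update_of_ne hx]
  simp only [contract, Multiset.mem_map]
  rintro _ ⟨e, -, rfl⟩
  exact ⟨hne e.1, hne e.2⟩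

theorem isolated_or_eq_cons (E : Multiset (V × V)) (v : V) :
    (∀ e ∈ E, e.1 ≠ v ∧ e.2 ≠ v) ∨ ∃ w E', E = (v, w) ::ₘ E' ∨ E = (w, v) ::ₘ E' := by
  refine or_iff_not_imp_left.2 fun hv => ?_
  push Not at hv
  obtain ⟨⟨u, w⟩, he, hv⟩ := hv
  obtain ⟨E', rfl⟩ := Multiset.exists_cons_of_mem he
  rcases eq_or_ne u v with rfl | hu
  · exact ⟨w, E', .inl rfl⟩
  · obtain rfl : w = v := hv hu
    exact ⟨u, E', .inr rfl⟩

variable [Fintype V]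

theorem prod_eq_zero_of_pinned [DecidableEq S] [CommSemiring R] {g : V → S → R} {u : V} {i : S}
    (hu : g u = Pi.single i 1) {σ : V → S} (hσ : σ u ≠ i) : ∏ v, g v (σ v) = 0 :=
  Finset.prod_eq_zero (Finset.mem_univ u) (by rw [hu, Pi.single_eq_of_ne hσ])

variable [DecidableEq V]

theorem prod_update_apply [CommMonoid R] (g : V → S → R) (v : V) (f : S → R) (σ : V → S) :
    ∏ u, update g v f u (σ u) = f (σ v) * ∏ u ∈ Finset.univ \ {v}, g u (σ u) := by
  simp only [apply_update (fun u (h : S → R) => h (σ u)) g v f]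
  exact Finset.prod_update_of_mem (Finset.mem_univ v) _ _

variable [Fintype S] [CommSemiring R]

/-- The partition function of the spin system with vertex set `V`, spins `S`, edges `E` and
interaction matrix `A`. The external field at `v` is a vector `g v` of weights, one for each spin,
so that pinning `v` to the spin `s` is the choice `g v = Pi.single s 1`. -/
def partitionFunction (A : Matrix S S R) (E : Multiset (V × V)) (g : V → S → R) : R :=
  ∑ σ : V → S, (E.map fun e => A (σ e.1) (σ e.2)).prod * ∏ v, g v (σ v)

/-- The effective field at `v`: the partition functions with `v` pinned to each spin, where the
field `g v` itself is left out. -/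
def marginal [DecidableEq S] (A : Matrix S S R) (E : Multiset (V × V)) (g : V → S → R) (v : V) :
    S → R :=
  fun s => partitionFunction A E (update g v (Pi.single s 1))

/-- The partition functions with `u` and `w` pinned, meaningful for `u ≠ w`. -/
def pairMarginal [DecidableEq S] (A : Matrix S S R) (E : Multiset (V × V)) (g : V → S → R)
    (u w : V) : Matrix S S R :=
  .of fun i j => marginal A E (update g u (Pi.single i 1)) w j

theorem partitionFunction_zero (A : Matrix S S R) (g : V → S → R) :
    partitionFunction A 0 g = ∏ v, ∑ s, g v s := by
  rw [Finset.prod_univ_sum, Fintype.piFinset_univ]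
  simp [partitionFunction]

variable [DecidableEq S] (A : Matrix S S R) (E : Multiset (V × V)) (g : V → S → R)

theorem partitionFunction_update (v : V) (f : S → R) :
    partitionFunction A E (update g v f) = ∑ s, f s * marginal A E g v s := by
  simp only [partitionFunction, marginal, prod_update_apply, Finset.mul_sum]
  rw [Finset.sum_comm]
  refine Finset.sum_congr rfl fun σ _ => ?_
  simp [Pi.single_apply, mul_left_comm]

theorem partitionFunction_eq_sum_marginal (v : V) :
    partitionFunction A E g = ∑ s, g v s * marginal A E g v s := by
  rw [← partitionFunction_update, update_eq_self]

theorem sum_ite_eq_mul_marginal (v : V) (s : S) :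
    (∑ σ : V → S, if σ v = s then
      (E.map fun e => A (σ e.1) (σ e.2)).prod * ∏ u, g u (σ u) else 0) =
    g v s * marginal A E g v s := by
  simp only [marginal, partitionFunction, prod_update_apply, Finset.mul_sum]
  refine Finset.sum_congr rfl fun σ _ => ?_
  have hprod := prod_update_apply g v (g v) σ
  rw [update_eq_self] at hprod
  rw [hprod]
  split_ifs with h
  · simp [h, mul_left_comm]
  · simp [h]

variable {A E g}

theorem partitionFunction_congr_of_pinned {E' : Multiset (V × V)} {u w : V} {i j : S} {a : R}
    (hu : g u = Pi.single i 1) (hw : g w = Pi.single j 1)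
    (h : ∀ σ : V → S, σ u = i → σ w = j →
      (E'.map fun e => A (σ e.1) (σ e.2)).prod = a * (E.map fun e => A (σ e.1) (σ e.2)).prod) :
    partitionFunction A E' g = a * partitionFunction A E g := by
  simp only [partitionFunction, Finset.mul_sum]
  refine Finset.sum_congr rfl fun σ _ => ?_
  by_cases hσu : σ u = i
  · by_cases hσw : σ w = j
    · rw [h σ hσu hσw, mul_assoc]
    · simp only [prod_eq_zero_of_pinned hw hσw, mul_zero]
  · simp only [prod_eq_zero_of_pinned hu hσu, mul_zero]

theorem partitionFunction_cons_of_pinned {u w : V} {i j : S}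
    (hu : g u = Pi.single i 1) (hw : g w = Pi.single j 1) :
    partitionFunction A ((u, w) ::ₘ E) g = A i j * partitionFunction A E g :=
  partitionFunction_congr_of_pinned hu hw fun σ hσu hσw => by
    rw [Multiset.map_cons, Multiset.prod_cons, hσu, hσw]

theorem partitionFunction_contract_of_pinned {u w : V} {i : S}
    (hu : g u = Pi.single i 1) (hw : g w = Pi.single i 1) :
    partitionFunction A (contract u w E) g = partitionFunction A E g := by
  refine (partitionFunction_congr_of_pinned hu hw fun σ hσu hσw => ?_).trans (one_mul _)
  have hσ (x : V) : σ (update id w u x) = σ x := by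
    rcases eq_or_ne x w with rfl | hx
    · rw [update_self, hσu, hσw]
    · rw [update_of_ne hx, id]
  simp only [contract, Multiset.map_map, comp_apply, Prod.map_fst, Prod.map_snd, hσ, one_mul]

theorem marginal_eq_of_isolated {v : V} (hv : ∀ e ∈ E, e.1 ≠ v ∧ e.2 ≠ v) (s t : S) :
    marginal A E g v s = marginal A E g v t := by
  let F : V → Equiv.Perm S := update (fun _ => Equiv.refl S) v (Equiv.swap s t)
  have hF {u : V} (hu : u ≠ v) (x : S) : F u x = x := by
    simp only [F, update_of_ne hu, Equiv.refl_apply]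
  refine Fintype.sum_equiv (Equiv.piCongrRight F) _ _ fun σ => ?_
  simp only [Equiv.piCongrRight_apply, Pi.map_apply]
  congr 1
  · refine congrArg _ (Multiset.map_congr rfl fun e he => ?_)
    rw [hF (hv e he).1, hF (hv e he).2]
  · refine Finset.prod_congr rfl fun u _ => ?_
    rcases eq_or_ne u v with rfl | hu
    · simp [F, Pi.single_apply, Equiv.swap_apply_eq_iff]
    · rw [update_of_ne hu, update_of_ne hu, hF hu]

variable (A E g)

theorem marginal_update_right {u w : V} (huw : u ≠ w) (f : S → R) :
    marginal A E (update g w f) u = pairMarginal A E g u w *ᵥ f := by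
  ext i
  rw [marginal, update_comm huw.symm, partitionFunction_update]
  simp only [Matrix.mulVec, dotProduct, pairMarginal, Matrix.of_apply, mul_comm]

theorem marginal_update_left {u w : V} (huw : u ≠ w) (f : S → R) :
    marginal A E (update g u f) w = f ᵥ* pairMarginal A E g u w := by
  ext j
  rw [marginal, update_comm huw, partitionFunction_update]
  simp only [Matrix.vecMul, dotProduct, pairMarginal, Matrix.of_apply, marginal, update_comm huw]

theorem marginal_contract {u w : V} (huw : u ≠ w) (s : S) :
    marginal A (contract u w E) (update g w (Pi.single s 1)) u = (pairMarginal A E g u w).diag := by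
  ext i
  rw [marginal, update_comm huw.symm, ← marginal,
    marginal_eq_of_isolated (ne_of_mem_contract huw E) s i]
  exact partitionFunction_contract_of_pinned
    (by rw [update_of_ne huw, update_self]) (update_self ..)

theorem marginal_cons_self (u : V) :
    marginal A ((u, u) ::ₘ E) g u = A.diag * marginal A E g u :=
  funext fun _ => partitionFunction_cons_of_pinned (update_self ..) (update_self ..)

theorem marginal_cons_swap {A : Matrix S S R} (hA : A.IsSymm) (u w v : V) :
    marginal A ((u, w) ::ₘ E) g v = marginal A ((w, u) ::ₘ E) g v := by
  ext s
  simp only [marginal, partitionFunction, Multiset.map_cons, hA.apply]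

theorem pairMarginal_cons {u w : V} (huw : u ≠ w) :
    pairMarginal A ((u, w) ::ₘ E) g u w = A ⊙ pairMarginal A E g u w := by
  ext i j
  exact partitionFunction_cons_of_pinned
    (by rw [update_of_ne huw, update_self]) (update_self ..)

theorem marginal_cons_of_ne {u w : V} (huw : u ≠ w) :
    marginal A ((u, w) ::ₘ E) g u = (A ⊙ pairMarginal A E g u w) *ᵥ g w := by
  rw [← pairMarginal_cons A E g huw, ← marginal_update_right _ _ _ huw, update_eq_self]

end PartitionFunction

section RatioCone

variable {R : Type*} [CommRing R]

/-- The spin weights `(1, y)` of the external field `y`; `false` is the spin `0` and `true` the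
spin `1`. -/
def fieldWeights (y : R) : Bool → R := fun s => if s then y else 1

theorem fieldWeights_zero : fieldWeights (0 : R) = Pi.single false 1 := by
  ext s
  cases s <;> simp [fieldWeights]

theorem mulVec_fieldWeights (N : Matrix Bool Bool R) (y : R) (i : Bool) :
    (N *ᵥ fieldWeights y) i = N i false + y * N i true := by
  simp [Matrix.mulVec, dotProduct, fieldWeights, add_comm, mul_comm]

theorem fieldWeights_vecMul (N : Matrix Bool Bool R) (y : R) (j : Bool) :
    (fieldWeights y ᵥ* N) j = N false j + y * N true j := by
  simp [Matrix.vecMul, dotProduct, fieldWeights, add_comm]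

theorem smul_eq_fieldWeights_add (r : R) (f : Bool → R) :
    (1 - r) • f =
      (f true - r * f false) • fieldWeights 1 + (f false - f true) • fieldWeights r := by
  ext s
  cases s <;> simp [fieldWeights] <;> ring

variable [LinearOrder R] {r : R} {f h : Bool → R}

/-- The cone of spin weights `f` with `0 < f₀` and `f₁ / f₀ ∈ [r, 1]`, written without division. -/
def ratioCone (r : R) : Set (Bool → R) :=
  {f | 0 < f false ∧ r * f false ≤ f true ∧ f true ≤ f false}

theorem mem_ratioCone_iff :
    f ∈ ratioCone r ↔ 0 < f false ∧ r * f false ≤ f true ∧ f true ≤ f false := Iff.rfl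

variable [IsStrictOrderedRing R]

theorem fieldWeights_mem_ratioCone {y : R} (hy : y ∈ Set.Icc r 1) :
    fieldWeights y ∈ ratioCone r := by
  simpa [ratioCone, fieldWeights] using hy

theorem single_false_mem_ratioCone (hr : r ≤ 0) : Pi.single false 1 ∈ ratioCone r :=
  fieldWeights_zero (R := R) ▸ fieldWeights_mem_ratioCone ⟨hr, zero_le_one⟩

theorem mul_mem_ratioCone (hr : -1 ≤ r) (hr' : r ≤ 0) (hf : f ∈ ratioCone r)
    (hh : h ∈ ratioCone r) : f * h ∈ ratioCone r := by
  obtain ⟨hf0, hf1, hf2⟩ := hf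
  obtain ⟨hh0, hh1, hh2⟩ := hh
  have hpos : 0 < f false * h false := mul_pos hf0 hh0
  refine ⟨hpos, ?_⟩
  simp only [Pi.mul_apply]
  rcases le_total 0 (h true) with hs | hs
  · have lower : r * f false * h true ≤ f true * h true := mul_le_mul_of_nonneg_right hf1 hs
    have upper : f true * h true ≤ f false * h true := mul_le_mul_of_nonneg_right hf2 hs
    have hmul : f false * h true ≤ f false * h false := mul_le_mul_of_nonneg_left hh2 hf0.le
    constructor <;> nlinarith
  · have lower : f false * h true ≤ f true * h true := mul_le_mul_of_nonpos_right hf2 hs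
    have upper : f true * h true ≤ r * f false * h true := mul_le_mul_of_nonpos_right hf1 hs
    have hmul : f false * (r * h false) ≤ f false * h true := mul_le_mul_of_nonneg_left hh1 hf0.le
    have hsq : r * r ≤ 1 := by nlinarith
    constructor <;> nlinarith

theorem sum_pos_of_mem_ratioCone (hr : -1 < r) (hf : f ∈ ratioCone r) : 0 < ∑ s, f s := by
  obtain ⟨h0, h1, -⟩ := hf
  rw [Fintype.sum_bool]
  nlinarith

theorem smul_add_smul_mem_ratioCone {p q : R} (hp : 0 ≤ p) (hq : 0 ≤ q) (hpq : 0 < p + q)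
    (hf : f ∈ ratioCone r) (hh : h ∈ ratioCone r) : p • f + q • h ∈ ratioCone r := by
  obtain ⟨hf0, hf1, hf2⟩ := hf
  obtain ⟨hh0, hh1, hh2⟩ := hh
  refine ⟨?_, ?_, ?_⟩ <;> simp only [Pi.add_apply, Pi.smul_apply, smul_eq_mul]
  · rcases hp.eq_or_lt with rfl | hp
    · simpa [hh0] using hpq
    · positivity
  · linear_combination p * hf1 + q * hh1
  · gcongr

theorem mem_ratioCone_of_smul_mem {c : R} (hc : 0 < c) (hf : c • f ∈ ratioCone r) :
    f ∈ ratioCone r := by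
  obtain ⟨h0, h1, h2⟩ := hf
  simp only [Pi.smul_apply, smul_eq_mul] at h0 h1 h2
  rw [mul_left_comm] at h1
  exact ⟨pos_of_mul_pos_right h0 hc.le, le_of_mul_le_mul_left h1 hc, le_of_mul_le_mul_left h2 hc⟩

theorem mulVec_mem_ratioCone (hr : r < 1) {N : Matrix Bool Bool R}
    (hN_one : N *ᵥ fieldWeights 1 ∈ ratioCone r) (hN_r : N *ᵥ fieldWeights r ∈ ratioCone r)
    (hf : f ∈ ratioCone r) : N *ᵥ f ∈ ratioCone r := by
  obtain ⟨h0, h1, h2⟩ := hf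
  refine mem_ratioCone_of_smul_mem (sub_pos.2 hr) ?_
  rw [← Matrix.mulVec_smul, smul_eq_fieldWeights_add, Matrix.mulVec_add, Matrix.mulVec_smul,
    Matrix.mulVec_smul]
  refine smul_add_smul_mem_ratioCone (sub_nonneg.2 h1) (sub_nonneg.2 h2) ?_ hN_one hN_r
  calc 0 < (1 - r) * f false := mul_pos (sub_pos.2 hr) h0
    _ = _ := by ring

end RatioCone

section EdgeInequalities

-- Here `z, a, b, c` stand for the entries `M₀₀, M₀₁, M₁₀, M₁₁`, and `s, t` for `y * M₀₁, y * M₁₁`,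
-- where `y` is the external field at the second endpoint of the edge.

variable {R : Type*} [CommRing R] [LinearOrder R] [IsStrictOrderedRing R] {r β γ z a b c s t : R}

theorem edge_upper_bound (hr : r ≤ 0) (hβ : 1 ≤ β * (1 + r)) (hγ : γ ∈ Set.Icc (r * β) (β + r - 1))
    (hz : 0 ≤ z) (hb : b ≤ z) (hs : r * z ≤ s) (ht : t ∈ Set.Icc (r * z) z) :
    b + γ * t ≤ β * z + s := by
  have hrz : r * z ≤ 0 := mul_nonpos_of_nonpos_of_nonneg hr hz
  have hγt : γ * t ≤ (β + r - 1) * z := by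
    rcases le_total 0 γ with h | h
    · calc γ * t ≤ γ * z := mul_le_mul_of_nonneg_left ht.2 h
        _ ≤ (β + r - 1) * z := mul_le_mul_of_nonneg_right hγ.2 hz
    · have hprod : 0 ≤ (β * (1 + r) - 1) * (1 - r) * z :=
        mul_nonneg (mul_nonneg (sub_nonneg.2 hβ) (by linarith)) hz
      calc γ * t ≤ γ * (r * z) := mul_le_mul_of_nonpos_left ht.1 h
        _ ≤ r * β * (r * z) := mul_le_mul_of_nonpos_right hγ.1 hrz
        _ ≤ (β + r - 1) * z := by linear_combination hprod
  linarith

theorem edge_lower_bound (hr : r ≤ 0) (hβ : 1 - r ≤ β) (hγ : γ ∈ Set.Icc (r * β) (β + r - 1))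
    (hb : r * z ≤ b) (hs : r * z ≤ s) (ht : r * z ≤ t)
    (hcrit : r * (β * z + s) ≤ b + r * β * t) : r * (β * z + s) ≤ b + γ * t := by
  rcases le_total 0 t with h | h
  · linarith [mul_le_mul_of_nonneg_right hγ.1 h]
  · have hγt : (β + r - 1) * t ≤ γ * t := mul_le_mul_of_nonpos_right hγ.2 h
    have ht' : (β + r - 1) * (r * z) ≤ (β + r - 1) * t := mul_le_mul_of_nonneg_left ht (by linarith)
    have hs' : r * s ≤ r * (r * z) := mul_le_mul_of_nonpos_left hs hr
    linarith

theorem critical_edge_bound_one (hr : r ≤ 0) (hr' : -1 < r) (hβ : 1 ≤ β * (1 + r)) (hc : c ≤ z)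
    (ha : r * (z + r * b) ≤ a + r * c) (hb : r * (z + r * a) ≤ b + r * c) :
    r * (β * z + a) ≤ b + r * β * c := by
  have hd : r * (z - c) ≤ 0 := mul_nonpos_of_nonpos_of_nonneg hr (sub_nonneg.2 hc)
  have hcancel : r * (z - c) ≤ (1 - r ^ 2) * a := by
    have hsum : (1 + r ^ 2) * (r * (z - c)) ≤ (1 + r ^ 2) * ((1 - r ^ 2) * a) := by
      linear_combination ha + r ^ 2 * hb
    exact le_of_mul_le_mul_left hsum (by positivity)
  have hscaled : (1 + r) * (β * (r * (z - c))) ≤ (1 + r) * (b - r * a) := by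
    calc (1 + r) * (β * (r * (z - c))) = β * (1 + r) * (r * (z - c)) := by ring
      _ ≤ r * (z - c) := mul_le_of_one_le_left hd hβ
      _ = (1 + r) * (r * (z - c)) + -r * (r * (z - c)) := by ring
      _ ≤ (1 + r) * (r * (z - c)) + -r * ((1 - r ^ 2) * a) := by gcongr; linarith
      _ = (1 + r) * (r * (z - c) + r ^ 2 * a - r * a) := by ring
      _ ≤ (1 + r) * (b - r * a) := by gcongr <;> linarith
  linarith [le_of_mul_le_mul_left hscaled (by linarith)]

theorem critical_edge_bound_self (hr : r ≤ 0) (hr' : -1 < r) (hβ : 1 ≤ β * (1 + r))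
    (hc : c ∈ Set.Icc (r * z) z) (hb : r * (z + r * a) ≤ b + r * c) :
    r * (β * z + r * a) ≤ b + r * β * (r * c) := by
  have hd : (1 + r) * (z - c) ≤ z - r * c := by linear_combination hc.1
  have hd' : 0 ≤ z - r * c := (mul_nonneg (by linarith) (sub_nonneg.2 hc.2)).trans hd
  have hscaled : (1 + r) * (z - c) ≤ (1 + r) * (β * (z - r * c)) :=
    calc (1 + r) * (z - c) ≤ z - r * c := hd
      _ ≤ β * (1 + r) * (z - r * c) := le_mul_of_one_le_left hd' hβ
      _ = (1 + r) * (β * (z - r * c)) := by ring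
  have hβd : z - c ≤ β * (z - r * c) := le_of_mul_le_mul_left hscaled (by linarith)
  linarith [mul_le_mul_of_nonpos_left hβd hr]

end EdgeInequalities

section Interaction

variable {R : Type*} [CommRing R] [LinearOrder R] {r : R} {A M : Matrix Bool Bool R}

/-- The interactions, normalised to be `1` between different spins, for which ratios in `[r, 1]`
are preserved. The lower bound on `A₁₁` is what a loop requires; the upper bound is what
`edge_upper_bound` requires at `b = t = z` and `s = r * z`. -/
structure IsStable (r : R) (A : Matrix Bool Bool R) : Prop where
  nonpos : r ≤ 0
  one_le : 1 ≤ A false false * (1 + r)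
  diag_true_mem : A true true ∈ Set.Icc (r * A false false) (A false false + r - 1)
  false_true : A false true = 1
  true_false : A true false = 1

namespace IsStable

theorem isSymm (hA : IsStable r A) : A.IsSymm := by
  ext i j
  cases i <;> cases j <;> simp [hA.false_true, hA.true_false]

theorem hadamard_mulVec_apply_false (hA : IsStable r A) (y : R) :
    ((A ⊙ M) *ᵥ fieldWeights y) false = A false false * M false false + y * M false true := by
  simp only [mulVec_fieldWeights, Matrix.hadamard_apply, hA.false_true, one_mul]

theorem hadamard_mulVec_apply_true (hA : IsStable r A) (y : R) :
    ((A ⊙ M) *ᵥ fieldWeights y) true = M true false + A true true * (y * M true true) := by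
  simp only [mulVec_fieldWeights, Matrix.hadamard_apply, hA.true_false, one_mul, mul_left_comm]

variable [IsStrictOrderedRing R]

theorem one_le_diag (hA : IsStable r A) : 1 ≤ A false false := by
  have hprod : 0 ≤ (A false false - 1) * (1 - r) := by
    linear_combination hA.diag_true_mem.1.trans hA.diag_true_mem.2
  exact sub_nonneg.1 (nonneg_of_mul_nonneg_left hprod (by linarith [hA.nonpos]))

theorem neg_one_lt (hA : IsStable r A) : -1 < r := by
  have hpos : 0 < 1 + r :=
    pos_of_mul_pos_right (zero_lt_one.trans_le hA.one_le) (zero_le_one.trans hA.one_le_diag)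
  linarith

theorem one_sub_le_diag (hA : IsStable r A) : 1 - r ≤ A false false := by
  linarith [hA.one_le, mul_le_mul_of_nonpos_right hA.one_le_diag hA.nonpos]

theorem diag_mem_ratioCone (hA : IsStable r A) : A.diag ∈ ratioCone r :=
  ⟨zero_lt_one.trans_le hA.one_le_diag, hA.diag_true_mem.1,
    hA.diag_true_mem.2.trans (by rw [Matrix.diag_apply]; linarith [hA.nonpos])⟩

theorem hadamard_mulVec_fieldWeights_mem (hA : IsStable r A) (hrow : M.row false ∈ ratioCone r)
    (hcol : M.col false ∈ ratioCone r) (hdiag : M.diag ∈ ratioCone r) {y : R}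
    (hy : y ∈ Set.Icc r 1)
    (hcrit : r * (A false false * M false false + y * M false true) ≤
      M true false + r * A false false * (y * M true true)) :
    (A ⊙ M) *ᵥ fieldWeights y ∈ ratioCone r := by
  have hy_mul {f : Bool → R} (hf : f ∈ ratioCone r) :
      y * f true ∈ Set.Icc (r * f false) (f false) := by
    simpa [fieldWeights] using
      (mul_mem_ratioCone hA.neg_one_lt.le hA.nonpos (fieldWeights_mem_ratioCone hy) hf).2
  have hs : y * M false true ∈ Set.Icc (r * M false false) (M false false) := hy_mul hrow
  have ht : y * M true true ∈ Set.Icc (r * M false false) (M false false) := hy_mul hdiag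
  obtain ⟨hz, hb, hb'⟩ := hcol
  rw [Matrix.col_apply] at hz hb hb'
  rw [mem_ratioCone_iff, hA.hadamard_mulVec_apply_false, hA.hadamard_mulVec_apply_true]
  refine ⟨?_, edge_lower_bound hA.nonpos hA.one_sub_le_diag hA.diag_true_mem hb hs.1 ht.1 hcrit,
    edge_upper_bound hA.nonpos hA.one_le hA.diag_true_mem hz.le hb' hs.1 ht⟩
  calc 0 < (A false false + r) * M false false := mul_pos (by linarith [hA.one_sub_le_diag]) hz
    _ ≤ A false false * M false false + y * M false true := by linarith [hs.1]

theorem hadamard_mulVec_mem_ratioCone (hA : IsStable r A)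
    (hrow : ∀ f ∈ ratioCone r, f ᵥ* M ∈ ratioCone r)
    (hcol : ∀ f ∈ ratioCone r, M *ᵥ f ∈ ratioCone r) (hdiag : M.diag ∈ ratioCone r)
    {f : Bool → R} (hf : f ∈ ratioCone r) : (A ⊙ M) *ᵥ f ∈ ratioCone r := by
  have hr := hA.nonpos
  have hr' := hA.neg_one_lt
  have hr_mem : r ∈ Set.Icc r 1 := ⟨le_rfl, hr.trans zero_le_one⟩
  have hpinned := single_false_mem_ratioCone hr
  have hrow_false : M.row false ∈ ratioCone r := by
    simpa only [Matrix.single_one_vecMul] using hrow _ hpinned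
  have hcol_false : M.col false ∈ ratioCone r := by
    simpa only [Matrix.mulVec_single_one] using hcol _ hpinned
  have ha : r * (M false false + r * M true false) ≤ M false true + r * M true true := by
    simpa only [fieldWeights_vecMul] using (hrow _ (fieldWeights_mem_ratioCone hr_mem)).2.1
  have hb : r * (M false false + r * M false true) ≤ M true false + r * M true true := by
    simpa only [mulVec_fieldWeights] using (hcol _ (fieldWeights_mem_ratioCone hr_mem)).2.1
  have hc : M true true ∈ Set.Icc (r * M false false) (M false false) := hdiag.2
  refine mulVec_mem_ratioCone (by linarith) ?_ ?_ hf
  · refine hA.hadamard_mulVec_fieldWeights_mem hrow_false hcol_false hdiag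
      ⟨hr_mem.2, le_rfl⟩ ?_
    simpa only [one_mul] using critical_edge_bound_one hr hr' hA.one_le hc.2 ha hb
  · exact hA.hadamard_mulVec_fieldWeights_mem hrow_false hcol_false hdiag hr_mem
      (critical_edge_bound_self hr hr' hA.one_le hc hb)

end IsStable

end Interaction

section Induction

variable {V R : Type*} [DecidableEq V] [CommRing R] [LinearOrder R] {r : R}
  {A : Matrix Bool Bool R} {E : Multiset (V × V)} {g : V → Bool → R}

theorem update_mem_ratioCone (hg : ∀ v, g v ∈ ratioCone r) (v : V) {f : Bool → R}
    (hf : f ∈ ratioCone r) (u : V) : update g v f u ∈ ratioCone r := by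
  rcases eq_or_ne u v with rfl | hu
  · rwa [update_self]
  · rw [update_of_ne hu]; exact hg u

variable [Fintype V]

/-- Fields in `ratioCone r` produce effective fields in `ratioCone r`: the statement proved by
induction on the number of edges. -/
def HasRatioBound (r : R) (A : Matrix Bool Bool R) (E : Multiset (V × V)) : Prop :=
  ∀ g : V → Bool → R, (∀ v, g v ∈ ratioCone r) → ∀ v, marginal A E g v ∈ ratioCone r

variable [IsStrictOrderedRing R]

theorem partitionFunction_zero_pos (hr : -1 < r) (hg : ∀ v, g v ∈ ratioCone r) :
    0 < partitionFunction A 0 g := by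
  rw [partitionFunction_zero]
  exact Finset.prod_pos fun v _ => sum_pos_of_mem_ratioCone hr (hg v)

theorem partitionFunction_pos_of_marginal_mem (hr : -1 < r) (hr' : r ≤ 0) {v : V}
    (hgv : g v ∈ ratioCone r) (hv : marginal A E g v ∈ ratioCone r) :
    0 < partitionFunction A E g := by
  rw [partitionFunction_eq_sum_marginal A E g v]
  exact sum_pos_of_mem_ratioCone hr (mul_mem_ratioCone hr.le hr' hgv hv)

theorem marginal_mem_ratioCone_of_isolated (hr : r ≤ 0) {v : V}
    (hv : ∀ e ∈ E, e.1 ≠ v ∧ e.2 ≠ v) (hpos : 0 < marginal A E g v false) :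
    marginal A E g v ∈ ratioCone r := by
  rw [mem_ratioCone_iff, marginal_eq_of_isolated hv true false]
  exact ⟨hpos, (mul_nonpos_of_nonpos_of_nonneg hr hpos.le).trans hpos.le, le_rfl⟩

theorem HasRatioBound.marginal_cons (hA : IsStable r A) {u w : V} (hE : HasRatioBound r A E)
    (hE' : HasRatioBound r A (contract u w E)) (hg : ∀ v, g v ∈ ratioCone r) :
    marginal A ((u, w) ::ₘ E) g u ∈ ratioCone r := by
  rcases eq_or_ne u w with rfl | huw
  · rw [marginal_cons_self]
    exact mul_mem_ratioCone hA.neg_one_lt.le hA.nonpos hA.diag_mem_ratioCone (hE g hg u)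
  rw [marginal_cons_of_ne A E g huw]
  refine hA.hadamard_mulVec_mem_ratioCone (fun f hf => ?_) (fun f hf => ?_) ?_ (hg w)
  · rw [← marginal_update_left A E g huw]
    exact hE _ (update_mem_ratioCone hg u hf) w
  · rw [← marginal_update_right A E g huw]
    exact hE _ (update_mem_ratioCone hg w hf) u
  · rw [← marginal_contract A E g huw false]
    exact hE' _ (update_mem_ratioCone hg w (single_false_mem_ratioCone hA.nonpos)) u

theorem hasRatioBound_zero (hr : -1 < r) (hr' : r ≤ 0) :
    HasRatioBound r A (0 : Multiset (V × V)) := fun _ hg v =>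
  marginal_mem_ratioCone_of_isolated hr' (by simp) <| partitionFunction_zero_pos hr <|
    update_mem_ratioCone hg v (single_false_mem_ratioCone hr')

theorem hasRatioBound_of_card_eq_succ (hA : IsStable r A) {k : ℕ}
    (ih : ∀ E : Multiset (V × V), E.card = k → HasRatioBound r A E) (hE : E.card = k + 1) :
    HasRatioBound r A E := by
  have hr := hA.nonpos
  have hcons {u w : V} {E' : Multiset (V × V)} (hE' : ((u, w) ::ₘ E').card = k + 1)
      {g : V → Bool → R} (hg : ∀ v, g v ∈ ratioCone r) :
      marginal A ((u, w) ::ₘ E') g u ∈ ratioCone r := by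
    rw [Multiset.card_cons, Nat.add_right_cancel_iff] at hE'
    exact (ih E' hE').marginal_cons hA (ih _ (by rw [contract, Multiset.card_map, hE'])) hg
  intro g hg v
  rcases isolated_or_eq_cons E v with hv | ⟨w, E', rfl | rfl⟩
  · obtain ⟨⟨u, w⟩, he⟩ := Multiset.card_pos_iff_exists_mem.1 (k.succ_pos.trans_eq hE.symm)
    obtain ⟨E', rfl⟩ := Multiset.exists_cons_of_mem he
    have hg' := update_mem_ratioCone hg v (single_false_mem_ratioCone hr)
    exact marginal_mem_ratioCone_of_isolated hr hv <|
      partitionFunction_pos_of_marginal_mem hA.neg_one_lt hr (hg' u) (hcons hE hg')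
  · exact hcons hE hg
  · rw [marginal_cons_swap _ _ hA.isSymm]
    exact hcons (by simpa using hE) hg

theorem hasRatioBound (hA : IsStable r A) (E : Multiset (V × V)) : HasRatioBound r A E := by
  induction hk : E.card generalizing E with
  | zero =>
    rw [Multiset.card_eq_zero.1 hk]
    exact hasRatioBound_zero hA.neg_one_lt hA.nonpos
  | succ k ih => exact hasRatioBound_of_card_eq_succ hA ih hk

theorem partitionFunction_pos (hA : IsStable r A) (hg : ∀ v, g v ∈ ratioCone r) :
    0 < partitionFunction A E g := by
  rcases E.empty_or_exists_mem with rfl | ⟨⟨u, -⟩, -⟩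
  · exact partitionFunction_zero_pos hA.neg_one_lt hg
  · exact partitionFunction_pos_of_marginal_mem hA.neg_one_lt hA.nonpos (hg u)
      (hasRatioBound hA E g hg u)

end Induction

theorem isStable_edgeW {β γ r : ℝ} (hr : r ≤ 0) (hβ : 1 ≤ β * (1 + r))
    (hγ : γ ∈ Set.Icc (r * β) (β + r - 1)) : IsStable r (.of (edgeW β γ)) :=
  ⟨hr, hβ, hγ, rfl, rfl⟩

theorem stable_bounds_div {K : Type*} [Field K] [LinearOrder K] [IsStrictOrderedRing K] {β γ : K}
    (hβγ : 1 ≤ β + γ) (hγ : γ ≤ 0) :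
    γ / β ≤ 0 ∧ 1 ≤ β * (1 + γ / β) ∧ γ ∈ Set.Icc (γ / β * β) (β + γ / β - 1) := by
  have hβ : 1 ≤ β := by linarith
  have hβ' : 0 < β := zero_lt_one.trans_le hβ
  have hcancel : γ / β * β = γ := div_mul_cancel₀ γ hβ'.ne'
  have hr : γ / β ≤ 0 := div_nonpos_of_nonpos_of_nonneg hγ hβ'.le
  have hle : γ ≤ γ / β := by nlinarith
  exact ⟨hr, by linarith, by linarith, by linarith⟩

end SpinSystem

open SpinSystem in
theorem ZRv_eq_mul_marginal (β γ : ℝ) (G : MultiGraph) (lam : Fin G.n → ℝ) (v : Fin G.n)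
    (i : Bool) :
    ZRv β γ G lam v i = (fieldWeights (lam v) *
      marginal (.of (edgeW β γ)) G.edges (fun u => fieldWeights (lam u)) v) i :=
  sum_ite_eq_mul_marginal (.of (edgeW β γ)) G.edges (fun u => fieldWeights (lam u)) v i

open SpinSystem in
theorem stmt1_general (β γ r : ℝ) (hr : r ≤ 0) (hβ : 1 ≤ β * (1 + r))
    (hγ : γ ∈ Set.Icc (r * β) (β + r - 1))
    (G : MultiGraph) (lam : Fin G.n → ℝ) (hlam : ∀ v, lam v ∈ Set.Icc r 1) :
    (∀ v : Fin G.n,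
        ZRv β γ G lam v false ≠ 0 ∧
        ZRv β γ G lam v true / ZRv β γ G lam v false ∈ Set.Icc r 1) ∧
    0 < ZR β γ G lam := by
  have hA := isStable_edgeW hr hβ hγ
  have hg (v : Fin G.n) := fieldWeights_mem_ratioCone (hlam v)
  refine ⟨fun v => ?_, partitionFunction_pos hA hg⟩
  have hmem := mul_mem_ratioCone hA.neg_one_lt.le hr (hg v) (hasRatioBound hA G.edges _ hg v)
  obtain ⟨h0, h1, h2⟩ := hmem
  simp only [← ZRv_eq_mul_marginal] at h0 h1 h2
  exact ⟨h0.ne', (le_div_iff₀ h0).2 h1, (div_le_one h0).2 h2⟩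

/-- If `β + γ ≥ 1` and `γ < 0`, then for every graph `G`, every external field
in `[γ/β, 1]^{V(G)}` and every vertex `v`:
(1) `[Z_{G,v}(λ)]₀ ≠ 0` and the ratio `R_{G,v}(λ)` lies in `[γ/β, 1]`;
(2) the partition function `Z_G(λ)` is strictly positive. -/
theorem stmt1 (β γ : ℝ) (hβγ : 1 ≤ β + γ) (hγ : γ < 0)
    (G : MultiGraph) (lam : Fin G.n → ℝ) (hlam : ∀ v, lam v ∈ Set.Icc (γ / β) 1) :
    (∀ v : Fin G.n,
        ZRv β γ G lam v false ≠ 0 ∧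
        ZRv β γ G lam v true / ZRv β γ G lam v false ∈ Set.Icc (γ / β) 1) ∧
    0 < ZR β γ G lam := by
  obtain ⟨hr, hβ, hγ'⟩ := SpinSystem.stable_bounds_div hβγ hγ.le
  exact stmt1_general β γ (γ / β) hr hβ hγ' G lam hlam
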